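/- arXiv:2402.11233 — 2 statements merged into one kernel-verified Lean document; each statement's English description precedes it below -/
import Mathlib

section
/- Fix n ≥ 1 and ν ∈ ℂ, and let J ⊆ (0,∞) be an open interval on which D_{n,ν}(2s) ≠ 0. Define σ(s) = 2s · D_{n,ν}'(2s)/D_{n,ν}(2s) − s² for s ∈ J, where D_{n,ν}' denotes the derivative with respect to the argument of D_{n,ν}. Then σ satisfies the σ-form of the Painlevé III equation on J: (s·σ''(s) − σ'(s))² = 4·(2σ(s) − s·σ'(s))·(σ'(s)² − 4s²) + 2·(θ₀² + θ∞²)·(σ'(s)² + 4s²) − 16·θ₀·θ∞·s·σ'(s), where θ₀ = ν − n and θ∞ = −(n+ν). -/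
/-!
Put `s = t / 2` and `c_k(s) = I_{k-ν}(2s)`. The classical Bessel relations become
`c_k' = c_{k-1} + c_{k+1}` and `s (c_{k-1} - c_{k+1}) = (k - ν) c_k`. With `m = n - 1`, let
`T = (c_{i-j})`, `T₋ = (c_{i-j-1})`, `T₊ = (c_{i-j+1})` be Toeplitz matrices of size `n` with rows
and columns indexed by `0, …, m`, and set `X = T⁻¹`, `A = T₋ X`, `A' = T₊ X`, `N = diag(0, …, m)`.

The matrices `A` and `A'` are of companion type (`down_succ`, `up_castSucc`), so by Jacobi's formula
`F = s ∂ₛ log det T` equals `s (A₀₀ + A'ₘₘ)` (`hasDerivAt_det_toep`). The Bessel relations give the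
matrix flow (`down_flow`, `up_flow`)

  `s ∂ₛ A = 2s (1 - A A') + [N, A] - A`,  `s ∂ₛ A' = 2s (1 - A' A) - [N, A'] - A'`.

Here the first row of `1 - A A'` and the last row of `1 - A' A` are multiples of the corresponding
rows of `X`, with a common factor `E` (`defect_down`, `defect_up`). Writing `ξ = A₀ₘ`, `η = A'ₘ₀`,
`w = ξ η` and `d = X₀₀ = Xₘₘ`, the corners of the flow read

  `1 - w = E d`,  `F' = 4s (1 - w)`,  `s ξ' = 2s E X₀ₘ - n ξ`,  `s η' = 2s E Xₘ₀ - n η`.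

Conjugating the recurrence by `T⁻¹` yields two algebraic relations between the corner entries,

  `s (ξ Xₘ₀ - η X₀ₘ) = -ν d`  (`corner_linear`),
  `2s E (d² - X₀ₘ Xₘ₀) + n (η X₀ₘ + ξ Xₘ₀) = (A₀₀ + A'ₘₘ) d`  (`corner_quadratic`),

and eliminating `X`, `E` and `d` (`scalar_identity`) leaves

  `(s w')² = 4 ((4 s² (1 - w) - 2 F) w (1 - w) + ν² (1 - w)² + n² w²)`.

Since `σ = F - s²`, we have `σ' = 4s (1 - w) - 2s` and `s σ'' - σ' = -4 s² w'`; substituting these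
turns the last equation, multiplied by `16 s²`, into the σ-form.
-/

/-- The modified Bessel function of the first kind `I_μ(t)`, for complex order `μ`
and real argument `t`, defined by its convergent power series, with
`(t/2)^μ := exp(μ · log(t/2))` using the real logarithm. -/
noncomputable def besselI (μ : ℂ) (t : ℝ) : ℂ :=
  ∑' k : ℕ, Complex.exp ((2 * (k : ℂ) + μ) * (Real.log (t / 2) : ℂ)) /
    ((k.factorial : ℂ) * Complex.Gamma ((k : ℂ) + μ + 1))

/-- The Toeplitz determinant `D_{n,ν}(t) = det( I_{i-j-ν}(t) )_{i,j=0}^{n-1}`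
(with `D_{0,ν}(t) = 1`). -/
noncomputable def toeplitzD (n : ℕ) (ν : ℂ) (t : ℝ) : ℂ :=
  Matrix.det (Matrix.of fun i j : Fin n => besselI (((i : ℕ) : ℂ) - ((j : ℕ) : ℂ) - ν) t)

/-- The shifted Toeplitz determinant `D'¹_{n,ν}(t) = det( I_{i-j-1-ν}(t) )_{i,j=0}^{n-1}`
(with `D'¹_{0,ν}(t) = 1`). -/
noncomputable def toeplitzD1 (n : ℕ) (ν : ℂ) (t : ℝ) : ℂ :=
  Matrix.det (Matrix.of fun i j : Fin n => besselI (((i : ℕ) : ℂ) - ((j : ℕ) : ℂ) - 1 - ν) t)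

/-! ### Bessel functions: power series, recurrence and derivative -/

/-- The coefficient `1 / (k! Γ(k+μ+1))` of the power series of `I_μ`; it vanishes where `Γ` has a
pole, because the junk value of `Complex.Gamma` there is `0`. -/
noncomputable def bCoeff (μ : ℂ) (k : ℕ) : ℂ := ((k.factorial : ℂ) * Complex.Gamma (k + μ + 1))⁻¹

/-- The entire function `z ↦ ∑ z ^ k / (k! Γ(k+μ+1))`, so that `I_μ(2s) = s ^ μ * bSer μ (s ^ 2)`. -/
noncomputable def bSer (μ : ℂ) (z : ℂ) : ℂ := ∑' k : ℕ, bCoeff μ k * z ^ k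

/-- Holds at the poles of `Γ` too, both sides being zero there. -/
theorem gamma_inv (z : ℂ) : (Complex.Gamma z)⁻¹ = z * (Complex.Gamma (z + 1))⁻¹ :=
  Complex.one_div_Gamma_eq_self_mul_one_div_Gamma_add_one z

theorem bCoeff_succ (μ : ℂ) (k : ℕ) : ((k : ℂ) + 1) * bCoeff μ (k + 1) = bCoeff (μ + 1) k := by
  have : ((k : ℂ) + 1) ≠ 0 := by exact_mod_cast k.succ_ne_zero
  simp only [bCoeff, Nat.factorial_succ, mul_inv]
  push_cast
  rw [show (k : ℂ) + 1 + μ + 1 = k + (μ + 1) + 1 by ring]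
  field_simp

theorem bCoeff_lower (μ : ℂ) (k : ℕ) : (μ + k) * bCoeff μ k = bCoeff (μ - 1) k := by
  simp only [bCoeff, mul_inv]
  rw [show (k : ℂ) + (μ - 1) + 1 = k + μ by ring, gamma_inv (k + μ)]
  ring

theorem bSer_summable (μ z : ℂ) : Summable fun k => bCoeff μ k * z ^ k := by
  apply summable_of_ratio_norm_eventually_le (r := 1 / 2) (by norm_num)
  have hlim : Filter.Tendsto (fun k : ℕ => ‖((k : ℂ) + 1 + μ)‖) Filter.atTop Filter.atTop := by
    apply Filter.tendsto_atTop_mono (f := fun k : ℕ => (k : ℝ) - ‖1 + μ‖)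
    · intro k
      have := norm_sub_norm_le (k : ℂ) (-(1 + μ))
      simp only [norm_neg, sub_neg_eq_add, Complex.norm_natCast] at this
      rwa [add_assoc]
    · exact Filter.tendsto_atTop_add_const_right _ _ tendsto_natCast_atTop_atTop
  filter_upwards [hlim.eventually_ge_atTop (2 * ‖z‖)] with k hk
  have h : ((k : ℂ) + 1) * ((k : ℂ) + 1 + μ) * bCoeff μ (k + 1) = bCoeff μ k := by
    have h1 := bCoeff_succ μ k
    have h2 := bCoeff_lower (μ + 1) k
    rw [← h1, add_sub_cancel_right] at h2
    rw [← h2]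
    ring
  rw [← h, norm_mul, norm_mul, norm_mul, norm_mul, pow_succ, norm_mul]
  have h1 : (1 : ℝ) ≤ ‖(k : ℂ) + 1‖ := by
    rw [show (k : ℂ) + 1 = ((k + 1 : ℕ) : ℂ) by push_cast; rfl, Complex.norm_natCast]
    simp
  have h3 : 2 * ‖z‖ ≤ ‖(k : ℂ) + 1‖ * ‖(k : ℂ) + 1 + μ‖ := by nlinarith [norm_nonneg z]
  have h4 : 0 ≤ ‖bCoeff μ (k + 1)‖ * ‖z ^ k‖ := by positivity
  nlinarith [mul_le_mul_of_nonneg_left h3 h4]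

/-- Termwise differentiation, dominated on the ball of radius `‖z‖ + 1` by the derived series at
that radius. -/
theorem bSer_hasDerivAt (μ z : ℂ) : HasDerivAt (bSer μ) (bSer (μ + 1) z) z := by
  set R : ℝ := ‖z‖ + 1
  have hR : 0 ≤ R := by positivity
  have hd : ∀ (n : ℕ) (y : ℂ), HasDerivAt (fun y => bCoeff μ n * y ^ n)
      (bCoeff μ n * (n * y ^ (n - 1))) y := fun n y => (hasDerivAt_pow n y).const_mul _
  have hs : ∀ y : ℂ, Summable fun n : ℕ => bCoeff μ n * (n * y ^ (n - 1)) := by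
    intro y
    rw [← summable_nat_add_iff 1]
    refine (bSer_summable (μ + 1) y).congr fun k => ?_
    rw [← bCoeff_succ]
    push_cast
    ring
  have key := hasDerivAt_tsum_of_isPreconnected (hs (R : ℂ)).norm Metric.isOpen_ball
    (convex_ball (0 : ℂ) R).isPreconnected (fun n y _ => hd n y) ?_
    (y₀ := z) (by simp [R]) (bSer_summable μ z) (y := z) (by simp [R])
  · refine key.congr_deriv ?_
    rw [(hs z).tsum_eq_zero_add, bSer]
    simp only [Nat.cast_zero, zero_mul, mul_zero, zero_add, add_tsub_cancel_right]
    refine tsum_congr fun k => ?_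
    rw [← bCoeff_succ]
    push_cast
    ring
  · intro n y hy
    have hy' : ‖y‖ ≤ R := by simpa using (Metric.mem_ball.mp hy).le
    simp only [norm_mul, norm_pow, Complex.norm_real, Real.norm_of_nonneg hR]
    gcongr

/-- The three-term recurrence `I_{μ-1} - I_{μ+1} = (μ/s) I_μ`, with the power of `s` removed. -/
theorem bSer_rec (μ z : ℂ) : bSer (μ - 1) z - z * bSer (μ + 1) z = μ * bSer μ z := by
  have h1 : z * bSer (μ + 1) z = ∑' k : ℕ, (k : ℂ) * bCoeff μ k * z ^ k := by
    have hsum : Summable fun k : ℕ => (k : ℂ) * bCoeff μ k * z ^ k := by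
      rw [← summable_nat_add_iff 1]
      refine ((bSer_summable (μ + 1) z).mul_left z).congr fun k => ?_
      rw [← bCoeff_succ]
      push_cast
      ring
    rw [hsum.tsum_eq_zero_add, bSer, ← tsum_mul_left]
    simp only [Nat.cast_zero, zero_mul, zero_add]
    refine tsum_congr fun k => ?_
    rw [← bCoeff_succ]
    push_cast
    ring
  have hsum : Summable fun k : ℕ => (k : ℂ) * bCoeff μ k * z ^ k := by
    refine ((bSer_summable (μ - 1) z).sub ((bSer_summable μ z).mul_left μ)).congr fun k => ?_
    rw [← bCoeff_lower]
    ring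
  rw [h1, sub_eq_iff_eq_add, bSer, bSer, ← tsum_mul_left,
    ← ((bSer_summable μ z).mul_left μ).tsum_add hsum]
  refine tsum_congr fun k => ?_
  rw [← bCoeff_lower]
  ring

theorem besselI_eq (μ : ℂ) {s : ℝ} (hs : 0 < s) :
    besselI μ (2 * s) = Complex.exp (μ * (Real.log s : ℂ)) * bSer μ ((s : ℂ) ^ 2) := by
  rw [besselI, bSer, ← tsum_mul_left]
  refine tsum_congr fun k => ?_
  have h : Complex.exp (Real.log s : ℂ) = s := by
    rw [← Complex.ofReal_exp, Real.exp_log hs]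
  rw [mul_div_cancel_left₀ s (two_ne_zero), add_mul, Complex.exp_add, bCoeff, div_eq_mul_inv,
    show 2 * (k : ℂ) * (Real.log s : ℂ) = ((2 * k : ℕ) : ℂ) * (Real.log s : ℂ) by push_cast; rfl,
    Complex.exp_nat_mul, h, pow_mul]
  ring

theorem exp_shift (μ : ℂ) {s : ℝ} (hs : 0 < s) :
    Complex.exp ((μ + 1) * (Real.log s : ℂ)) = Complex.exp (μ * (Real.log s : ℂ)) * s := by
  rw [add_mul, Complex.exp_add, one_mul, ← Complex.ofReal_exp (Real.log s), Real.exp_log hs]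

theorem besselI_rec (μ : ℂ) {s : ℝ} (hs : 0 < s) :
    (s : ℂ) * (besselI (μ - 1) (2 * s) - besselI (μ + 1) (2 * s)) = μ * besselI μ (2 * s) := by
  have h1 := exp_shift μ hs
  have h2 := exp_shift (μ - 1) hs
  rw [sub_add_cancel] at h2
  rw [besselI_eq _ hs, besselI_eq _ hs, besselI_eq _ hs, h1, h2]
  linear_combination (Complex.exp ((μ - 1) * (Real.log s : ℂ)) * s) * bSer_rec μ ((s : ℂ) ^ 2)

theorem besselI_hasDerivAt (μ : ℂ) {s : ℝ} (hs : 0 < s) :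
    HasDerivAt (fun x : ℝ => besselI μ (2 * x))
      (besselI (μ - 1) (2 * s) + besselI (μ + 1) (2 * s)) s := by
  have hs' : (s : ℂ) ≠ 0 := by exact_mod_cast hs.ne'
  have hexp : HasDerivAt (fun x : ℝ => Complex.exp (μ * (Real.log x : ℂ)))
      (Complex.exp (μ * (Real.log s : ℂ)) * (μ * ((s⁻¹ : ℝ) : ℂ))) s :=
    ((Real.hasDerivAt_log hs.ne').ofReal_comp.const_mul μ).cexp
  have hser : HasDerivAt (fun x : ℝ => bSer μ ((x : ℂ) ^ 2))
      (bSer (μ + 1) ((s : ℂ) ^ 2) * (2 * (s : ℂ))) s := by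
    have h := (bSer_hasDerivAt μ ((s : ℂ) ^ 2)).comp (s : ℂ) (hasDerivAt_pow 2 (s : ℂ))
    have := h.comp_ofReal
    simpa using this
  have h := hexp.mul hser
  have heq : (fun x : ℝ => besselI μ (2 * x)) =ᶠ[nhds s] fun x : ℝ =>
      Complex.exp (μ * (Real.log x : ℂ)) * bSer μ ((x : ℂ) ^ 2) := by
    filter_upwards [lt_mem_nhds hs] with x hx using besselI_eq μ hx
  refine (h.congr_of_eventuallyEq heq).congr_deriv ?_
  have hr := besselI_rec μ hs
  have h1 : Complex.exp (μ * (Real.log s : ℂ)) * (μ * ((s⁻¹ : ℝ) : ℂ)) * bSer μ ((s : ℂ) ^ 2) =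
      besselI (μ - 1) (2 * s) - besselI (μ + 1) (2 * s) := by
    rw [← mul_right_inj' hs', hr, besselI_eq _ hs]
    push_cast
    field_simp
  rw [h1, besselI_eq (μ + 1) hs, exp_shift μ hs]
  ring

/-! ### Toeplitz matrices and their companion quotients -/

open Matrix

/-- The Toeplitz matrix `(c_{i-j})` of size `m + 1`. -/
def toep (m : ℕ) (c : ℤ → ℂ) : Matrix (Fin (m + 1)) (Fin (m + 1)) ℂ :=
  Matrix.of fun i j => c ((i : ℤ) - (j : ℤ))

/-- The Toeplitz matrix `(c_{i-j+r})`; thus `T`, `T₋`, `T₊` are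
the cases `r = 0, -1, 1`. -/
def toepS (m : ℕ) (c : ℤ → ℂ) (r : ℤ) : Matrix (Fin (m + 1)) (Fin (m + 1)) ℂ :=
  toep m fun k => c (k + r)

/-- The diagonal matrix `N = diag(0, …, m)`. -/
def idx (m : ℕ) : Matrix (Fin (m + 1)) (Fin (m + 1)) ℂ :=
  Matrix.diagonal fun i => ((i : ℕ) : ℂ)

theorem idx_commutator (m : ℕ) (M : Matrix (Fin (m + 1)) (Fin (m + 1)) ℂ) (i j : Fin (m + 1)) :
    (idx m * M - M * idx m) i j = ((i : ℕ) : ℂ) * M i j - M i j * ((j : ℕ) : ℂ) := by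
  rw [Matrix.sub_apply, idx, Matrix.diagonal_mul, Matrix.mul_diagonal]

section Algebra
variable {m : ℕ} {c : ℤ → ℂ} {s ν : ℂ}

/-- The recurrence for the symbol, written as a commutator identity for Toeplitz matrices. -/
theorem bessel_comm (hrec : ∀ k : ℤ, s * (c (k - 1) - c (k + 1)) = (k - ν) * c k) (r : ℤ) :
    s • (toepS m c (r - 1) - toepS m c (r + 1)) =
      idx m * toepS m c r - toepS m c r * idx m + ((r : ℂ) - ν) • toepS m c r := by
  ext i j
  have := hrec ((i : ℤ) - j + r)
  simp only [toepS, toep, idx, Matrix.smul_apply, Matrix.sub_apply, Matrix.add_apply,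
    Matrix.of_apply, Matrix.diagonal_mul, Matrix.mul_diagonal, smul_eq_mul]
  rw [show (i : ℤ) - j + (r - 1) = i - j + r - 1 by ring,
    show (i : ℤ) - j + (r + 1) = i - j + r + 1 by ring, this]
  push_cast
  ring

theorem toepS_rev (r : ℤ) (i j : Fin (m + 1)) :
    toepS m c r i.rev j.rev = toepS m c r j i := by
  simp only [toepS, toep, Matrix.of_apply, Fin.val_rev]
  congr 1
  omega

/-- Symmetry about the antidiagonal: reversing both indices amounts to transposing. -/
abbrev Persym (M : Matrix (Fin (m + 1)) (Fin (m + 1)) ℂ) : Prop :=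
  M.submatrix Fin.revPerm Fin.revPerm = Mᵀ

theorem persym_toepS (r : ℤ) : Persym (toepS m c r) := by
  ext i j
  exact toepS_rev r i j

theorem persym_inv {M : Matrix (Fin (m + 1)) (Fin (m + 1)) ℂ} (h : Persym M) : Persym M⁻¹ := by
  have := Matrix.inv_submatrix_equiv M (Fin.revPerm (n := m+1)) (Fin.revPerm (n := m+1))
  rw [Persym, ← this, h, Matrix.transpose_nonsing_inv]

theorem submatrix_rev_mul {M N : Matrix (Fin (m + 1)) (Fin (m + 1)) ℂ} :
    (M * N).submatrix Fin.revPerm Fin.revPerm =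
      M.submatrix Fin.revPerm Fin.revPerm * N.submatrix Fin.revPerm Fin.revPerm :=
  Matrix.submatrix_mul M N _ _ _ Fin.revPerm.bijective

/-- Antidiagonal reflection is an antiautomorphism, so it reverses a product of persymmetric
matrices. -/
theorem rev_mul_three {L M N : Matrix (Fin (m + 1)) (Fin (m + 1)) ℂ}
    (hL : Persym L) (hM : Persym M) (hN : Persym N) (i j : Fin (m + 1)) :
    (L * M * N) i.rev j.rev = (N * M * L) j i := by
  have h : (L * M * N).submatrix Fin.revPerm Fin.revPerm = (N * M * L)ᵀ := by
    rw [submatrix_rev_mul, submatrix_rev_mul, hL, hM, hN, Matrix.transpose_mul,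
      Matrix.transpose_mul, Matrix.mul_assoc]
  exact congrFun (congrFun h i) j

/-- Row `i + 1` of `T₋` is row `i` of `T`, so `A = T₋ T⁻¹` is a companion matrix: below its first
row it is the down shift. -/
theorem down_succ (hdet : IsUnit (toepS m c 0).det) (i : Fin m) (j : Fin (m + 1)) :
    (toepS m c (-1) * (toepS m c 0)⁻¹) i.succ j = (1 : Matrix _ _ ℂ) i.castSucc j := by
  rw [← Matrix.mul_nonsing_inv _ hdet, Matrix.mul_apply, Matrix.mul_apply]
  refine Finset.sum_congr rfl fun k _ => ?_
  congr 1
  simp only [toepS, toep, Matrix.of_apply, Fin.val_succ, Fin.val_castSucc]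
  congr 1
  push_cast
  ring

/-- Above its last row, `A' = T₊ T⁻¹` is the up shift. -/
theorem up_castSucc (hdet : IsUnit (toepS m c 0).det) (i : Fin m) (j : Fin (m + 1)) :
    (toepS m c 1 * (toepS m c 0)⁻¹) i.castSucc j = (1 : Matrix _ _ ℂ) i.succ j := by
  rw [← Matrix.mul_nonsing_inv _ hdet, Matrix.mul_apply, Matrix.mul_apply]
  refine Finset.sum_congr rfl fun k _ => ?_
  congr 1
  simp only [toepS, toep, Matrix.of_apply, Fin.val_succ, Fin.val_castSucc]
  congr 1
  push_cast
  ring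

section comp
variable {A : Matrix (Fin (m + 1)) (Fin (m + 1)) ℂ}

theorem mul_down_castSucc (h : ∀ (i : Fin m) j, A i.succ j = (1 : Matrix _ _ ℂ) i.castSucc j)
    (V : Matrix (Fin (m + 1)) (Fin (m + 1)) ℂ) (i : Fin (m + 1)) (j : Fin m) :
    (V * A) i j.castSucc = V i 0 * A 0 j.castSucc + V i j.succ := by
  rw [Matrix.mul_apply, Fin.sum_univ_succ]
  congr 1
  rw [Finset.sum_eq_single j]
  · simp [h]
  · intro k _ hk
    rw [h, Matrix.one_apply_ne (by simpa using hk), mul_zero]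
  · simp

theorem mul_down_last (h : ∀ (i : Fin m) j, A i.succ j = (1 : Matrix _ _ ℂ) i.castSucc j)
    (V : Matrix (Fin (m + 1)) (Fin (m + 1)) ℂ) (i : Fin (m + 1)) :
    (V * A) i (Fin.last m) = V i 0 * A 0 (Fin.last m) := by
  rw [Matrix.mul_apply, Fin.sum_univ_succ, Finset.sum_eq_zero, add_zero]
  intro k _
  rw [h, Matrix.one_apply_ne k.castSucc_lt_last.ne, mul_zero]

theorem mul_up_succ (h : ∀ (i : Fin m) j, A i.castSucc j = (1 : Matrix _ _ ℂ) i.succ j)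
    (V : Matrix (Fin (m + 1)) (Fin (m + 1)) ℂ) (i : Fin (m + 1)) (j : Fin m) :
    (V * A) i j.succ = V i j.castSucc + V i (Fin.last m) * A (Fin.last m) j.succ := by
  rw [Matrix.mul_apply, Fin.sum_univ_castSucc]
  congr 1
  rw [Finset.sum_eq_single j]
  · simp [h]
  · intro k _ hk
    rw [h, Matrix.one_apply_ne (by simpa using hk), mul_zero]
  · simp

theorem mul_up_zero (h : ∀ (i : Fin m) j, A i.castSucc j = (1 : Matrix _ _ ℂ) i.succ j)
    (V : Matrix (Fin (m + 1)) (Fin (m + 1)) ℂ) (i : Fin (m + 1)) :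
    (V * A) i 0 = V i (Fin.last m) * A (Fin.last m) 0 := by
  rw [Matrix.mul_apply, Fin.sum_univ_castSucc, Finset.sum_eq_zero, zero_add]
  intro k _
  rw [h, Matrix.one_apply_ne (Fin.succ_ne_zero k), mul_zero]

end comp

theorem trace_down (hdet : IsUnit (toepS m c 0).det) :
    (toepS m c (-1) * (toepS m c 0)⁻¹).trace = (toepS m c (-1) * (toepS m c 0)⁻¹) 0 0 := by
  rw [Matrix.trace, Fin.sum_univ_succ, Finset.sum_eq_zero, add_zero, Matrix.diag]
  intro i _
  rw [Matrix.diag, down_succ hdet, Matrix.one_apply_ne (Fin.castSucc_lt_succ).ne]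

theorem trace_up (hdet : IsUnit (toepS m c 0).det) :
    (toepS m c 1 * (toepS m c 0)⁻¹).trace =
      (toepS m c 1 * (toepS m c 0)⁻¹) (Fin.last m) (Fin.last m) := by
  rw [Matrix.trace, Fin.sum_univ_castSucc, Finset.sum_eq_zero, zero_add, Matrix.diag]
  intro i _
  rw [Matrix.diag, up_castSucc hdet, Matrix.one_apply_ne (Fin.castSucc_lt_succ).ne.symm]

/-- The first row of `1 - A A'` is `E` times the first row of `T⁻¹`, with `E = (T - A T₊)₀₀`:
column `k + 1` of `T₊` is column `k` of `T`, and column `k + 1` of `T` is column `k` of `T₋`, so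
`T - A T₊` vanishes off its first column. -/
theorem defect_down (hdet : IsUnit (toepS m c 0).det) (j : Fin (m + 1)) :
    (1 - (toepS m c (-1) * (toepS m c 0)⁻¹) * (toepS m c 1 * (toepS m c 0)⁻¹)) 0 j =
      (toepS m c 0 - toepS m c (-1) * (toepS m c 0)⁻¹ * toepS m c 1) 0 0 *
        (toepS m c 0)⁻¹ 0 j := by
  set T := toepS m c 0 with hT
  have h1 : 1 - toepS m c (-1) * T⁻¹ * (toepS m c 1 * T⁻¹) =
      (T - toepS m c (-1) * T⁻¹ * toepS m c 1) * T⁻¹ := by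
    rw [Matrix.sub_mul, Matrix.mul_nonsing_inv _ hdet, Matrix.mul_assoc (_ * _)]
  rw [h1, Matrix.mul_apply, Fin.sum_univ_succ, Finset.sum_eq_zero, add_zero]
  intro k _
  have h2 : (toepS m c (-1) * T⁻¹ * toepS m c 1) 0 k.succ =
      (toepS m c (-1) * T⁻¹ * T) 0 k.castSucc := by
    rw [Matrix.mul_apply, Matrix.mul_apply]
    refine Finset.sum_congr rfl fun l _ => ?_
    congr 1
    simp only [hT, toepS, toep, Matrix.of_apply, Fin.val_succ, Fin.val_castSucc]
    congr 1
    push_cast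
    ring
  rw [Matrix.sub_apply, h2, Matrix.nonsing_inv_mul_cancel_right _ _ hdet]
  simp only [hT, toepS, toep, Matrix.of_apply, Fin.val_succ, Fin.val_castSucc]
  rw [mul_eq_zero, sub_eq_zero]
  left
  congr 1
  push_cast
  ring

/-- The last row of `1 - A' A` is `E` times the last row of `T⁻¹`, with the same `E` as in
`defect_down` because `T`, `T₋`, `T₊` are persymmetric. -/
theorem defect_up (hdet : IsUnit (toepS m c 0).det) (j : Fin (m + 1)) :
    (1 - (toepS m c 1 * (toepS m c 0)⁻¹) * (toepS m c (-1) * (toepS m c 0)⁻¹)) (Fin.last m) j =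
      (toepS m c 0 - toepS m c (-1) * (toepS m c 0)⁻¹ * toepS m c 1) 0 0 *
        (toepS m c 0)⁻¹ (Fin.last m) j := by
  have hE : (toepS m c 0 - toepS m c (-1) * (toepS m c 0)⁻¹ * toepS m c 1) 0 0 =
      (toepS m c 0 - toepS m c 1 * (toepS m c 0)⁻¹ * toepS m c (-1))
        (Fin.last m) (Fin.last m) := by
    rw [Matrix.sub_apply, Matrix.sub_apply, ← rev_mul_three (persym_toepS _)
      (persym_inv (persym_toepS _)) (persym_toepS _), ← toepS_rev]
    simp
  rw [hE]
  set T := toepS m c 0 with hT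
  have h1 : 1 - toepS m c 1 * T⁻¹ * (toepS m c (-1) * T⁻¹) =
      (T - toepS m c 1 * T⁻¹ * toepS m c (-1)) * T⁻¹ := by
    rw [Matrix.sub_mul, Matrix.mul_nonsing_inv _ hdet, Matrix.mul_assoc (_ * _)]
  rw [h1, Matrix.mul_apply, Fin.sum_univ_castSucc, Finset.sum_eq_zero, zero_add]
  intro k _
  have h2 : (toepS m c 1 * T⁻¹ * toepS m c (-1)) (Fin.last m) k.castSucc =
      (toepS m c 1 * T⁻¹ * T) (Fin.last m) k.succ := by
    rw [Matrix.mul_apply, Matrix.mul_apply]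
    refine Finset.sum_congr rfl fun l _ => ?_
    congr 1
    simp only [hT, toepS, toep, Matrix.of_apply, Fin.val_succ, Fin.val_castSucc]
    congr 1
    push_cast
    ring
  rw [Matrix.sub_apply, h2, Matrix.nonsing_inv_mul_cancel_right _ _ hdet]
  simp only [hT, toepS, toep, Matrix.of_apply, Fin.val_succ, Fin.val_castSucc]
  rw [mul_eq_zero, sub_eq_zero]
  left
  congr 1
  push_cast
  ring

/-! ### Corner identities -/

/-- `s (X A - X A') = X N - N X - ν X` for `X = T⁻¹`: the identity `bessel_comm` conjugated by
`T⁻¹`. -/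
theorem inv_bessel (hrec : ∀ k : ℤ, s * (c (k - 1) - c (k + 1)) = (k - ν) * c k)
    (hdet : IsUnit (toepS m c 0).det) (i j : Fin (m + 1)) :
    s * (((toepS m c 0)⁻¹ * (toepS m c (-1) * (toepS m c 0)⁻¹)) i j -
      ((toepS m c 0)⁻¹ * (toepS m c 1 * (toepS m c 0)⁻¹)) i j) =
      ((j : ℂ) - (i : ℂ) - ν) * (toepS m c 0)⁻¹ i j := by
  have h := bessel_comm (m := m) hrec 0
  rw [zero_sub, zero_add] at h
  set T := toepS m c 0
  have h2 : s • (T⁻¹ * (toepS m c (-1) * T⁻¹) - T⁻¹ * (toepS m c 1 * T⁻¹)) =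
      T⁻¹ * idx m - idx m * T⁻¹ - ν • T⁻¹ := by
    calc _ = T⁻¹ * (s • (toepS m c (-1) - toepS m c 1)) * T⁻¹ := by
          rw [Matrix.mul_smul, Matrix.smul_mul, Matrix.mul_sub, Matrix.sub_mul,
            Matrix.mul_assoc, Matrix.mul_assoc]
      _ = T⁻¹ * idx m * (T * T⁻¹) - (T⁻¹ * T) * idx m * T⁻¹ - ν • (T⁻¹ * T * T⁻¹) := by
          rw [h]
          simp only [Matrix.mul_add, Matrix.mul_sub, Matrix.add_mul, Matrix.sub_mul,
            Matrix.mul_smul, Matrix.smul_mul, Matrix.mul_assoc]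
          module
      _ = _ := by
          rw [Matrix.mul_nonsing_inv _ hdet, Matrix.nonsing_inv_mul _ hdet, Matrix.one_mul,
            Matrix.mul_one, Matrix.one_mul]
  have h3 := congrFun (congrFun h2 i) j
  simp only [Matrix.smul_apply, Matrix.sub_apply, idx, Matrix.mul_diagonal, Matrix.diagonal_mul,
    smul_eq_mul] at h3
  rw [h3]
  ring

/-- The `(0, 0)` entry of `inv_bessel`; it is where the parameter `ν` enters the final equation. -/
theorem corner_linear (hrec : ∀ k : ℤ, s * (c (k - 1) - c (k + 1)) = (k - ν) * c k)
    (hdet : IsUnit (toepS m c 0).det) {A A' X : Matrix (Fin (m + 1)) (Fin (m + 1)) ℂ}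
    (hX : X = (toepS m c 0)⁻¹) (hA : A = toepS m c (-1) * X) (hA' : A' = toepS m c 1 * X) :
    s * (A 0 (Fin.last m) * X (Fin.last m) 0 - A' (Fin.last m) 0 * X 0 (Fin.last m)) =
      -ν * X 0 0 := by
  have pX : Persym X := hX ▸ persym_inv (persym_toepS 0)
  have h := inv_bessel hrec hdet 0 0
  rw [← hX, ← hA, ← hA'] at h
  have e1 : (X * A) 0 0 = X (Fin.last m) 0 * A 0 (Fin.last m) := by
    rw [← mul_down_last (by rw [hA, hX]; exact down_succ hdet), hA, ← Matrix.mul_assoc,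
      ← rev_mul_three pX (persym_toepS _) pX, Fin.rev_zero]
  have e2 : (X * A') 0 0 = X 0 (Fin.last m) * A' (Fin.last m) 0 :=
    mul_up_zero (by rw [hA', hX]; exact up_castSucc hdet) _ _
  rw [e1, e2] at h
  linear_combination h

/-- The quadratic relation between the corner entries of `A`, `A'` and `X = T⁻¹`. The entries next
to the corners are eliminated between `inv_bessel` at `(0,1)`, `(1,0)`, `(0,m)`, `(m,0)`, the
defect identities, `corner_linear` and the persymmetry of `X A` and `X A'`. -/
theorem corner_quadratic (hrec : ∀ k : ℤ, s * (c (k - 1) - c (k + 1)) = (k - ν) * c k)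
    (hdet : IsUnit (toepS m c 0).det) {A A' X : Matrix (Fin (m + 1)) (Fin (m + 1)) ℂ}
    (hX : X = (toepS m c 0)⁻¹) (hA : A = toepS m c (-1) * X) (hA' : A' = toepS m c 1 * X) :
    2 * s * (toepS m c 0 - A * toepS m c 1) 0 0 *
        (X 0 0 ^ 2 - X 0 (Fin.last m) * X (Fin.last m) 0) +
      (m + 1) * (A' (Fin.last m) 0 * X 0 (Fin.last m) + A 0 (Fin.last m) * X (Fin.last m) 0) =
      (A 0 0 + A' (Fin.last m) (Fin.last m)) * X 0 0 := by
  -- for `m = 0` all corners coincide and the indices `1` and `m - 1` do not exist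
  cases m with
  | zero =>
    simp only [Fin.last_zero, Fin.isValue]
    push_cast
    ring
  | succ m =>
  have pX : Persym X := hX ▸ persym_inv (persym_toepS 0)
  have dA : ∀ (i : Fin (m + 1)) j, A i.succ j = (1 : Matrix _ _ ℂ) i.castSucc j := by
    rw [hA, hX]; exact down_succ hdet
  have uA : ∀ (i : Fin (m + 1)) j, A' i.castSucc j = (1 : Matrix _ _ ℂ) i.succ j := by
    rw [hA', hX]; exact up_castSucc hdet
  have rA : ∀ i j, (X * A) i j = (X * A) j.rev i.rev := fun i j => by
    rw [hA, ← Matrix.mul_assoc, rev_mul_three pX (persym_toepS _) pX]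
  have rA' : ∀ i j, (X * A') i j = (X * A') j.rev i.rev := fun i j => by
    rw [hA', ← Matrix.mul_assoc, rev_mul_three pX (persym_toepS _) pX]
  have rX : ∀ i j, X i j = X j.rev i.rev := fun i j =>
    (congrFun (congrFun pX j) i).symm
  have hb := inv_bessel hrec hdet
  rw [← hX, ← hA, ← hA'] at hb
  have lin := corner_linear hrec hdet hX hA hA'
  have gd := fun j => defect_down hdet j
  have gu := fun j => defect_up hdet j
  rw [← hX, ← hA, ← hA'] at gd gu
  set E := (toepS (m + 1) c 0 - A * toepS (m + 1) c 1) 0 0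
  -- the second and the penultimate index
  set o : Fin (m + 2) := Fin.succ 0 with ho
  set q : Fin (m + 2) := (Fin.last m).castSucc with hq
  set L : Fin (m + 2) := Fin.last (m + 1) with hL
  have l0 : L = (Fin.last m).succ := rfl
  have ro : o.rev = q := by ext; simp [ho, hq, Fin.val_rev]
  have rq : q.rev = o := by ext; simp [ho, hq, Fin.val_rev]
  have r0 : (0 : Fin (m + 2)).rev = L := Fin.rev_zero _
  have rL : L.rev = 0 := Fin.rev_last _
  have D1 : ∀ i, (X * A) i 0 = X i 0 * A 0 0 + X i o := fun i => mul_down_castSucc dA X i 0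
  have D2 : ∀ i, (X * A) i L = X i 0 * A 0 L := fun i => mul_down_last dA X i
  have D3 : ∀ i, (X * A) i q = X i 0 * A 0 q + X i L :=
    fun i => mul_down_castSucc dA X i (Fin.last m)
  have U1 : ∀ i, (X * A') i L = X i q + X i L * A' L L :=
    fun i => mul_up_succ uA X i (Fin.last m)
  have U2 : ∀ i, (X * A') i 0 = X i L * A' L 0 := fun i => mul_up_zero uA X i
  have U3 : ∀ i, (X * A') i o = X i 0 + X i L * A' L o := fun i => mul_up_succ uA X i 0
  have xLL : X L L = X 0 0 := by rw [rX, rL]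
  have xq : X 0 q = X o L := by rw [rX, rq, r0]
  have xLq : X L q = X o 0 := by rw [rX, rq, rL]
  have xq0 : X q 0 = X L o := by rw [rX, r0, rq]
  have a00 : X 0 0 * A 0 0 + X 0 o = X L 0 * A 0 L := by rw [← D1, ← D2, rA, r0]
  have aLL : X L q + X L L * A' L L = X 0 L * A' L 0 := by rw [← U1, ← U2, rA', rL]
  have b01 := hb 0 o
  rw [rA, ro, r0, D2, U3, xq0] at b01
  have b10 := hb o 0
  rw [rA, r0, ro, D3, xLL, U2] at b10
  have b0L := hb 0 L
  rw [rA, rL, r0, D2, U1, xq] at b0L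
  have bL0 := hb L 0
  rw [D1, U2, xLL] at bL0
  rw [xLq, xLL] at aLL
  have g0 := gd 0
  have gL := gd L
  have k0 := gu 0
  have M1 : (A * A') 0 0 = A 0 L * A' L 0 := mul_up_zero uA A 0
  have M2 : (A * A') 0 L = A 0 q + A 0 L * A' L L := mul_up_succ uA A 0 (Fin.last m)
  have M3 : (A' * A) L 0 = A' L 0 * A 0 0 + A' L o := mul_down_castSucc dA A' L 0
  have L0 : L ≠ 0 := l0 ▸ Fin.succ_ne_zero _
  rw [Matrix.sub_apply, Matrix.one_apply_eq, M1] at g0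
  rw [Matrix.sub_apply, Matrix.one_apply_ne L0.symm, M2] at gL
  rw [Matrix.sub_apply, Matrix.one_apply_ne L0, M3] at k0
  have vo : ((o : ℕ) : ℂ) = 1 := by simp [ho]
  have vL : ((L : ℕ) : ℂ) = m + 1 := by simp [hL]
  have v0 : (((0 : Fin (m + 2)) : ℕ) : ℂ) = 0 := by simp
  rw [vo, v0] at b01 b10
  rw [vL, v0] at b0L bL0
  push_cast
  linear_combination (ν - 1) * a00 - (ν + 1) * aLL - A' L 0 * b0L + A 0 L * bL0 - b01 + b10 -
    2 * s * X 0 0 * g0 + s * X L 0 * gL + s * X 0 L * k0 - (A 0 0 - A' L L) * lin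

end Algebra

/-! ### Derivatives of determinants and inverses -/

section Calculus

/-- Entrywise derivative of a matrix-valued function. -/
def HasMatDeriv {l : Type*} (M : ℝ → Matrix l l ℂ) (M' : Matrix l l ℂ) (s : ℝ) : Prop :=
  ∀ i j, HasDerivAt (fun u => M u i j) (M' i j) s

theorem HasMatDeriv.mul {l : Type*} [Fintype l] {M N : ℝ → Matrix l l ℂ} {M' N' : Matrix l l ℂ}
    {s : ℝ} (hM : HasMatDeriv M M' s) (hN : HasMatDeriv N N' s) :
    HasMatDeriv (fun u => M u * N u) (M' * N s + M s * N') s := by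
  intro i j
  simp only [Matrix.mul_apply, Matrix.add_apply]
  rw [← Finset.sum_add_distrib]
  exact HasDerivAt.fun_sum fun k _ => (hM i k).mul (hN k j)

section
variable {l : Type*} [Fintype l] [DecidableEq l] {M : ℝ → Matrix l l ℂ} {M' : Matrix l l ℂ}
  {s : ℝ}

/-- Jacobi's formula. -/
theorem HasMatDeriv.det (hM : HasMatDeriv M M' s) :
    HasDerivAt (fun u => (M u).det) ((M s).adjugate * M').trace s := by
  have h : HasDerivAt (fun u => ∑ σ : Equiv.Perm l, ((Equiv.Perm.sign σ : ℤ) : ℂ) *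
      ∏ i, M u (σ i) i) (∑ σ : Equiv.Perm l, ((Equiv.Perm.sign σ : ℤ) : ℂ) *
        ∑ i, (∏ j ∈ Finset.univ.erase i, M s (σ j) j) • M' (σ i) i) s :=
    HasDerivAt.fun_sum fun σ _ =>
      (HasDerivAt.fun_finsetProd fun i _ => hM (σ i) i).const_mul _
  simp only [← Matrix.det_apply'] at h
  refine h.congr_deriv ?_
  simp only [Finset.mul_sum, Matrix.trace, Matrix.diag]
  rw [Finset.sum_comm]
  refine Finset.sum_congr rfl fun i _ => ?_
  have hi : ((M s).adjugate * M') i i = ((M s).updateCol i (fun k => M' k i)).det := by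
    rw [← Matrix.cramer_apply, Matrix.cramer_eq_adjugate_mulVec]
    rfl
  rw [hi, Matrix.det_apply']
  refine Finset.sum_congr rfl fun σ _ => ?_
  rw [← Finset.mul_prod_erase Finset.univ _ (Finset.mem_univ i), Matrix.updateCol_self,
    smul_eq_mul, mul_comm (M' (σ i) i)]
  congr 2
  refine Finset.prod_congr rfl fun j hj => ?_
  rw [Matrix.updateCol_ne (Finset.ne_of_mem_erase hj)]

/-- Entries of the inverse are differentiable by Cramer's rule; the value of the derivative then
comes from differentiating `M⁻¹ M = 1`. -/
theorem HasMatDeriv.inv (hM : HasMatDeriv M M' s) (hdet : (M s).det ≠ 0) :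
    HasMatDeriv (fun u => (M u)⁻¹) (-((M s)⁻¹ * M' * (M s)⁻¹)) s := by
  have hd : ∀ i j, ∃ d, HasDerivAt (fun u => (M u)⁻¹ i j) d s := by
    intro i j
    have hadj : HasMatDeriv (fun u => (M u).updateRow j (Pi.single i 1)) (M'.updateRow j 0) s := by
      intro a b
      by_cases hab : a = j
      · subst hab
        simpa using hasDerivAt_const s _
      · simpa [Matrix.updateRow_ne hab] using hM a b
    refine ⟨_, ((hM.det.inv hdet).mul hadj.det).congr_of_eventuallyEq
      (Filter.Eventually.of_forall fun u => ?_)⟩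
    simp [Matrix.inv_def, Matrix.adjugate_apply, Ring.inverse_eq_inv']
  choose X' hX' using hd
  have hX : HasMatDeriv (fun u => (M u)⁻¹) (Matrix.of X') s := hX'
  have hne : ∀ᶠ u in nhds s, (M u).det ≠ 0 := hM.det.continuousAt.eventually_ne hdet
  have hu : IsUnit (M s).det := isUnit_iff_ne_zero.mpr hdet
  have hprod : (Matrix.of X') * M s + (M s)⁻¹ * M' = 0 := by
    ext i j
    refine ((hX.mul hM) i j).unique
      ((hasDerivAt_const s ((1 : Matrix l l ℂ) i j)).congr_of_eventuallyEq ?_)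
    filter_upwards [hne] with u hu
    rw [Matrix.nonsing_inv_mul _ (isUnit_iff_ne_zero.mpr hu)]
  have : Matrix.of X' = -((M s)⁻¹ * M' * (M s)⁻¹) := by
    rw [← Matrix.neg_mul, ← eq_neg_of_add_eq_zero_left hprod,
      Matrix.mul_nonsing_inv_cancel_right _ _ hu]
  rwa [← this]

end

/-! ### The flow of the Toeplitz matrices -/

section Flow
variable {m : ℕ} {c : ℤ → ℝ → ℂ} {s : ℝ} {ν : ℂ}

theorem hasMatDeriv_toepS (hc : ∀ k, HasDerivAt (c k) (c (k - 1) s + c (k + 1) s) s) (r : ℤ) :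
    HasMatDeriv (fun u => toepS m (fun k => c k u) r)
      (toepS m (fun k => c k s) (r - 1) + toepS m (fun k => c k s) (r + 1)) s := by
  intro i j
  have h := hc ((i : ℤ) - j + r)
  simp only [toepS, toep, Matrix.of_apply, Matrix.add_apply]
  rwa [show (i : ℤ) - j + (r - 1) = i - j + r - 1 by ring,
    show (i : ℤ) - j + (r + 1) = i - j + r + 1 by ring]

/-- The logarithmic derivative of `det T` is `tr (A + A')`, and these companion matrices have only
one diagonal entry each. -/
theorem hasDerivAt_det_toep (hc : ∀ k, HasDerivAt (c k) (c (k - 1) s + c (k + 1) s) s)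
    (hdet : IsUnit (toepS m (fun k => c k s) 0).det) :
    HasDerivAt (fun u => (toepS m (fun k => c k u) 0).det)
      ((toepS m (fun k => c k s) 0).det *
        ((toepS m (fun k => c k s) (-1) * (toepS m (fun k => c k s) 0)⁻¹) 0 0 +
        (toepS m (fun k => c k s) 1 * (toepS m (fun k => c k s) 0)⁻¹)
          (Fin.last m) (Fin.last m))) s := by
  refine (hasMatDeriv_toepS hc 0).det.congr_deriv ?_
  rw [← trace_down hdet, ← trace_up hdet, ← Matrix.trace_add, ← Matrix.add_mul,
    Matrix.trace_mul_comm _ (_⁻¹), Matrix.inv_def, Ring.inverse_eq_inv', Matrix.smul_mul,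
    Matrix.trace_smul, smul_eq_mul, mul_inv_cancel_left₀ hdet.ne_zero]
  simp

/-- The flow `s A_s = 2s (1 - A A') + [N, A] - A`. In the raw derivative the shift by `-2` and the
term `A A` are removed by `bessel_comm`. -/
theorem down_flow (hc : ∀ k, HasDerivAt (c k) (c (k - 1) s + c (k + 1) s) s)
    (hrec : ∀ k : ℤ, (s : ℂ) * (c (k - 1) s - c (k + 1) s) = (k - ν) * c k s)
    (hdet : IsUnit (toepS m (fun k => c k s) 0).det)
    {A A' X : Matrix (Fin (m + 1)) (Fin (m + 1)) ℂ}
    (hX : X = (toepS m (fun k => c k s) 0)⁻¹) (hA : A = toepS m (fun k => c k s) (-1) * X)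
    (hA' : A' = toepS m (fun k => c k s) 1 * X) :
    ∃ R, HasMatDeriv (fun u => toepS m (fun k => c k u) (-1) * (toepS m (fun k => c k u) 0)⁻¹) R s
      ∧ (s : ℂ) • R = (2 * s : ℂ) • (1 - A * A') + (idx m * A - A * idx m) - A := by
  refine ⟨_, (hasMatDeriv_toepS hc (-1)).mul ((hasMatDeriv_toepS hc 0).inv hdet.ne_zero), ?_⟩
  have h0 := bessel_comm (m := m) (c := fun k => c k s) hrec 0
  have h1 := bessel_comm (m := m) (c := fun k => c k s) hrec (-1)
  rw [← hX]
  have i1 : (-1 - 1 : ℤ) = -2 := rfl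
  have i2 : (-1 + 1 : ℤ) = 0 := rfl
  simp only [zero_sub, zero_add, Int.cast_zero] at h0
  simp only [i1, i2, Int.cast_neg, Int.cast_one] at h1
  simp only [zero_sub, zero_add, i1, i2, Matrix.mul_neg]
  set T := toepS m (fun k => c k s) 0
  set P := toepS m (fun k => c k s) (-1)
  set Q := toepS m (fun k => c k s) 1
  set P2 := toepS m (fun k => c k s) (-2)
  have hTX : T * X = 1 := hX ▸ Matrix.mul_nonsing_inv _ hdet
  have e0 : (s : ℂ) • (A - A') = idx m - T * idx m * X - ν • (1 : Matrix _ _ ℂ) := by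
    rw [hA, hA', ← Matrix.sub_mul, ← Matrix.smul_mul, h0]
    simp only [Matrix.add_mul, Matrix.sub_mul, Matrix.mul_assoc, Matrix.smul_mul, hTX,
      Matrix.mul_one]
    module
  have e1 : (s : ℂ) • (P2 * X - 1) = idx m * A - P * idx m * X - (1 + ν) • A := by
    rw [← hTX, ← Matrix.sub_mul, ← Matrix.smul_mul, h1]
    simp only [Matrix.add_mul, Matrix.sub_mul, Matrix.mul_assoc, Matrix.smul_mul, ← hA]
    module
  have e2 : P * idx m * X = A * (T * idx m * X) := by
    rw [hA]
    have hXT : X * T = 1 := hX ▸ Matrix.nonsing_inv_mul _ hdet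
    simp only [← Matrix.mul_assoc]
    rw [Matrix.mul_assoc P X T, hXT, Matrix.mul_one]
  have e3 : T * idx m * X = idx m - ν • (1 : Matrix _ _ ℂ) - (s : ℂ) • (A - A') := by
    rw [e0]; abel
  rw [e2, e3] at e1
  have e4 : (P2 + T) * X + -(P * (X * (P + Q) * X)) =
      (P2 * X - 1) + (2 : ℂ) • 1 - A * A - A * A' := by
    simp only [Matrix.add_mul, Matrix.mul_add, Matrix.mul_assoc, hTX, hA, hA']
    module
  rw [e4, smul_sub, smul_sub, smul_add, e1]
  simp only [Matrix.mul_sub, Matrix.mul_smul, Matrix.mul_one]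
  module

/-- The flow `s A'_s = 2s (1 - A' A) - [N, A'] - A'`. -/
theorem up_flow (hc : ∀ k, HasDerivAt (c k) (c (k - 1) s + c (k + 1) s) s)
    (hrec : ∀ k : ℤ, (s : ℂ) * (c (k - 1) s - c (k + 1) s) = (k - ν) * c k s)
    (hdet : IsUnit (toepS m (fun k => c k s) 0).det)
    {A A' X : Matrix (Fin (m + 1)) (Fin (m + 1)) ℂ}
    (hX : X = (toepS m (fun k => c k s) 0)⁻¹) (hA : A = toepS m (fun k => c k s) (-1) * X)
    (hA' : A' = toepS m (fun k => c k s) 1 * X) :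
    ∃ R, HasMatDeriv (fun u => toepS m (fun k => c k u) 1 * (toepS m (fun k => c k u) 0)⁻¹) R s
      ∧ (s : ℂ) • R = (2 * s : ℂ) • (1 - A' * A) - (idx m * A' - A' * idx m) - A' := by
  refine ⟨_, (hasMatDeriv_toepS hc 1).mul ((hasMatDeriv_toepS hc 0).inv hdet.ne_zero), ?_⟩
  have h0 := bessel_comm (m := m) (c := fun k => c k s) hrec 0
  have h1 := bessel_comm (m := m) (c := fun k => c k s) hrec 1
  rw [← hX]
  have i1 : (1 - 1 : ℤ) = 0 := rfl
  have i2 : (1 + 1 : ℤ) = 2 := rfl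
  simp only [zero_sub, zero_add, Int.cast_zero] at h0
  simp only [i1, i2, Int.cast_one] at h1
  simp only [zero_sub, zero_add, i1, i2, Matrix.mul_neg]
  set T := toepS m (fun k => c k s) 0
  set P := toepS m (fun k => c k s) (-1)
  set Q := toepS m (fun k => c k s) 1
  set Q2 := toepS m (fun k => c k s) 2
  have hTX : T * X = 1 := hX ▸ Matrix.mul_nonsing_inv _ hdet
  have e0 : (s : ℂ) • (A - A') = idx m - T * idx m * X - ν • (1 : Matrix _ _ ℂ) := by
    rw [hA, hA', ← Matrix.sub_mul, ← Matrix.smul_mul, h0]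
    simp only [Matrix.add_mul, Matrix.sub_mul, Matrix.mul_assoc, Matrix.smul_mul, hTX,
      Matrix.mul_one]
    module
  have e1 : (s : ℂ) • (1 - Q2 * X) = idx m * A' - Q * idx m * X + (1 - ν) • A' := by
    rw [← hTX, ← Matrix.sub_mul, ← Matrix.smul_mul, h1]
    simp only [Matrix.add_mul, Matrix.sub_mul, Matrix.mul_assoc, Matrix.smul_mul, ← hA']
  have e2 : Q * idx m * X = A' * (T * idx m * X) := by
    rw [hA']
    have hXT : X * T = 1 := hX ▸ Matrix.nonsing_inv_mul _ hdet
    simp only [← Matrix.mul_assoc]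
    rw [Matrix.mul_assoc Q X T, hXT, Matrix.mul_one]
  have e3 : T * idx m * X = idx m - ν • (1 : Matrix _ _ ℂ) - (s : ℂ) • (A - A') := by
    rw [e0]; abel
  rw [e2, e3] at e1
  have e4 : (T + Q2) * X + -(Q * (X * (P + Q) * X)) =
      -(1 - Q2 * X) + (2 : ℂ) • 1 - A' * A - A' * A' := by
    simp only [Matrix.add_mul, Matrix.mul_add, Matrix.mul_assoc, hTX, hA, hA']
    module
  rw [e4, smul_sub, smul_sub, smul_add, smul_neg, e1]
  simp only [Matrix.mul_sub, Matrix.mul_smul, Matrix.mul_one]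
  module

end Flow
end Calculus

/-! ### The closed system for the corner entries -/

/-- Elimination of the auxiliary entries. Here `ξ, η` are the off-diagonal corners of `A, A'`, the
variables `d, x, y` are corners of `T⁻¹`, and `P, Q` stand for `s ξ'` and `s η'`. Both
`P Q` and `P η - ξ Q` depend only on `w` and `f`, and `(P η + ξ Q)² = 4 P Q ξ η + (P η - ξ Q)²`. -/
theorem scalar_identity {s ν n d E ξ η f x y P Q w : ℂ}
    (hw : w = ξ * η) (hE : 1 - w = E * d)
    (lin : s * (ξ * y - η * x) = -ν * d)
    (quad : 2 * s * E * (d ^ 2 - x * y) + n * (η * x + ξ * y) = f * d)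
    (hP : P = 2 * s * (E * x) - n * ξ) (hQ : Q = 2 * s * (E * y) - n * η) :
    (P * η + ξ * Q) ^ 2 = 4 * ((4 * s ^ 2 * (1 - w) - 2 * (s * f)) * w * (1 - w) +
      ν ^ 2 * (1 - w) ^ 2 + n ^ 2 * w ^ 2) := by
  have h1 : P * Q = (4 * s ^ 2 * (1 - w) - 2 * (s * f)) * (1 - w) + n ^ 2 * w := by
    rw [hE, hP, hQ, hw]
    linear_combination (-2 * s * E) * quad
  have h2 : P * η - ξ * Q = 2 * ν * (1 - w) := by
    rw [hE, hP, hQ]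
    linear_combination (-2 * E) * lin
  calc _ = 4 * (P * Q) * (ξ * η) + (P * η - ξ * Q) ^ 2 := by ring
    _ = _ := by rw [h1, h2, ← hw]; ring

section Final
variable {m : ℕ} {c : ℤ → ℝ → ℂ} {s : ℝ} {ν : ℂ}

/-- `F = s (A₀₀ + A'_{mm})`, the logarithmic derivative `s ∂ₛ log det T`. -/
noncomputable def hamF (m : ℕ) (c : ℤ → ℝ → ℂ) (s : ℝ) : ℂ :=
  s * ((toepS m (fun k => c k s) (-1) * (toepS m (fun k => c k s) 0)⁻¹) 0 0 +
    (toepS m (fun k => c k s) 1 * (toepS m (fun k => c k s) 0)⁻¹) (Fin.last m) (Fin.last m))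

/-- `w = A_{0m} A'_{m0}`. -/
noncomputable def ratW (m : ℕ) (c : ℤ → ℝ → ℂ) (s : ℝ) : ℂ :=
  (toepS m (fun k => c k s) (-1) * (toepS m (fun k => c k s) 0)⁻¹) 0 (Fin.last m) *
    (toepS m (fun k => c k s) 1 * (toepS m (fun k => c k s) 0)⁻¹) (Fin.last m) 0

/-- The closed system for `F` and `w`: `F' = 4 s (1 - w)` together with a quadratic equation for
`s w'`. -/
theorem hamiltonian_flow (hs : s ≠ 0)
    (hc : ∀ k, HasDerivAt (c k) (c (k - 1) s + c (k + 1) s) s)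
    (hrec : ∀ k : ℤ, (s : ℂ) * (c (k - 1) s - c (k + 1) s) = (k - ν) * c k s)
    (hdet : (toepS m (fun k => c k s) 0).det ≠ 0) :
    HasDerivAt (hamF m c) (4 * s * (1 - ratW m c s)) s ∧
    ∃ W, HasDerivAt (ratW m c) W s ∧
      (s * W) ^ 2 = 4 * ((4 * (s : ℂ) ^ 2 * (1 - ratW m c s) - 2 * hamF m c s) *
        ratW m c s * (1 - ratW m c s) + ν ^ 2 * (1 - ratW m c s) ^ 2 +
        ((m + 1 : ℕ) : ℂ) ^ 2 * ratW m c s ^ 2) := by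
  have hs' : (s : ℂ) ≠ 0 := by exact_mod_cast hs
  have hu := isUnit_iff_ne_zero.mpr hdet
  obtain ⟨R, hR, eR⟩ := down_flow hc hrec hu rfl rfl rfl
  obtain ⟨R', hR', eR'⟩ := up_flow hc hrec hu rfl rfl rfl
  have lin := corner_linear (c := fun k => c k s) hrec hu rfl rfl rfl
  have quad := corner_quadratic (c := fun k => c k s) hrec hu rfl rfl rfl
  have gd := defect_down hu
  have gu := defect_up hu
  have xLL := persym_inv (persym_toepS (m := m) (c := fun k => c k s) 0)
  have xLL := congrFun (congrFun xLL 0) 0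
  simp only [Matrix.submatrix_apply, Fin.revPerm_apply, Fin.rev_zero, Matrix.transpose_apply] at xLL
  have hw := mul_up_zero (up_castSucc hu)
    (toepS m (fun k => c k s) (-1) * (toepS m (fun k => c k s) 0)⁻¹) 0
  have hF : HasDerivAt (hamF m c) _ s := (HasDerivAt.ofReal_comp (hasDerivAt_id s)).mul
    ((hR 0 0).add (hR' (Fin.last m) (Fin.last m)))
  have hW : HasDerivAt (ratW m c) _ s := (hR 0 (Fin.last m)).mul (hR' (Fin.last m) 0)
  have r00 := congrFun (congrFun eR 0) 0
  have r0L := congrFun (congrFun eR 0) (Fin.last m)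
  have rL0 := congrFun (congrFun eR' (Fin.last m)) 0
  have rLL := congrFun (congrFun eR' (Fin.last m)) (Fin.last m)
  simp only [hamF, ratW]
  simp only [Matrix.sub_apply (_ • _ + _), Matrix.sub_apply (_ • _ - _), Matrix.add_apply,
    Matrix.smul_apply, gd, gu, Matrix.sub_apply (_ • _),
    idx_commutator,
    smul_eq_mul, xLL, Fin.val_zero, Fin.val_last, Nat.cast_zero] at r00 r0L rL0 rLL
  have g0 := gd 0
  rw [Matrix.sub_apply, Matrix.one_apply_eq, hw] at g0
  refine ⟨hF.congr_deriv ?_, _, hW, ?_⟩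
  · simp only [id, Complex.ofReal_one]
    rw [g0]
    linear_combination r00 + rLL
  · rw [← scalar_identity (P := s * R 0 (Fin.last m)) (Q := s * R' (Fin.last m) 0) rfl g0 lin
      (n := ((m + 1 : ℕ) : ℂ)) (by push_cast; exact quad) ?_ ?_]
    · ring
    · push_cast
      linear_combination r0L
    · push_cast
      linear_combination rL0

end Final

/-- The Toeplitz coefficients `c_k(s) = I_{k-ν}(2s)`. -/
noncomputable def bSym (ν : ℂ) (k : ℤ) (s : ℝ) : ℂ := besselI (k - ν) (2 * s)

theorem toeplitzD_eq (m : ℕ) (ν : ℂ) (s : ℝ) :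
    toeplitzD (m + 1) ν (2 * s) = (toepS m (fun k => bSym ν k s) 0).det := by
  rw [toeplitzD]
  congr 1
  ext i j
  simp [toepS, toep, bSym]

/-- `σ(s) = 2s·D_{n,ν}'(2s)/D_{n,ν}(2s) - s²` satisfies the σ-form of the
Painlevé III equation with `θ₀ = ν - n`, `θ∞ = -(n+ν)` on an open interval `J ⊆ (0,∞)`
where `D_{n,ν}(2s) ≠ 0`. -/
theorem sigma_form_painleveIII (n : ℕ) (hn : 1 ≤ n) (ν : ℂ) (J : Set ℝ)
    (hJopen : IsOpen J) (hJconn : J.OrdConnected) (hJpos : J ⊆ Set.Ioi (0 : ℝ))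
    (hne : ∀ s ∈ J, toeplitzD n ν (2 * s) ≠ 0)
    (σ : ℝ → ℂ)
    (hσ : ∀ s ∈ J, σ s = 2 * (s : ℂ) * deriv (toeplitzD n ν) (2 * s) /
      toeplitzD n ν (2 * s) - (s : ℂ) ^ 2) :
    ∀ s ∈ J,
      ((s : ℂ) * deriv (deriv σ) s - deriv σ s) ^ 2 =
        4 * (2 * σ s - (s : ℂ) * deriv σ s) * ((deriv σ s) ^ 2 - 4 * (s : ℂ) ^ 2) +
          2 * ((ν - (n : ℂ)) ^ 2 + (-((n : ℂ) + ν)) ^ 2) * ((deriv σ s) ^ 2 + 4 * (s : ℂ) ^ 2) -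
          16 * (ν - (n : ℂ)) * (-((n : ℂ) + ν)) * (s : ℂ) * deriv σ s := by
  obtain ⟨m, rfl⟩ : ∃ m, n = m + 1 := ⟨n - 1, by omega⟩
  have hc : ∀ s ∈ J, ∀ k, HasDerivAt (bSym ν k) (bSym ν (k - 1) s + bSym ν (k + 1) s) s := by
    intro s hs k
    have h := besselI_hasDerivAt (k - ν) (hJpos hs)
    refine h.congr_deriv ?_
    simp only [bSym]
    push_cast
    rw [sub_right_comm, sub_add_eq_add_sub]
  have hrec : ∀ s ∈ J, ∀ k : ℤ, (s : ℂ) * (bSym ν (k - 1) s - bSym ν (k + 1) s) =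
      (k - ν) * bSym ν k s := by
    intro s hs k
    have h := besselI_rec (k - ν) (hJpos hs)
    rw [sub_right_comm, sub_add_eq_add_sub] at h
    simpa only [bSym, Int.cast_sub, Int.cast_add, Int.cast_one] using h
  have hdet : ∀ s ∈ J, (toepS m (fun k => bSym ν k s) 0).det ≠ 0 := fun s hs => by
    rw [← toeplitzD_eq]; exact hne s hs
  have hflow := fun s hs =>
    hamiltonian_flow (hJpos hs).ne' (hc s hs) (hrec s hs) (hdet s hs)
  have hσ0 : ∀ s ∈ J, σ s = hamF m (bSym ν) s - (s : ℂ) ^ 2 := by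
    intro s hs
    have h1 := (hasDerivAt_det_toep (hc s hs) (isUnit_iff_ne_zero.mpr (hdet s hs))).deriv
    simp only [← toeplitzD_eq] at h1
    rw [deriv_comp_mul_left, Complex.real_smul] at h1
    have hD := hne s hs
    rw [hσ s hs, hamF, show 2 * (s : ℂ) * deriv (toeplitzD (m + 1) ν) (2 * s) =
      s * (((2 : ℝ) : ℂ) * deriv (toeplitzD (m + 1) ν) (2 * s)) by push_cast; ring, h1]
    field_simp
  have hσ1 : ∀ s ∈ J, deriv σ s = 4 * s * (1 - ratW m (bSym ν) s) - 2 * s := by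
    intro s hs
    have hsq : HasDerivAt (fun x : ℝ => (x : ℂ) ^ 2) (2 * s) s := by
      simpa using (hasDerivAt_pow 2 (s : ℂ)).comp_ofReal
    refine (((hflow s hs).1.sub hsq).congr_of_eventuallyEq ?_).deriv
    filter_upwards [hJopen.mem_nhds hs] with x hx using hσ0 x hx
  intro s hs
  obtain ⟨-, W, hW, hquad⟩ := hflow s hs
  have hid : HasDerivAt (fun x : ℝ => (x : ℂ)) 1 s := by
    simpa using (hasDerivAt_id s).ofReal_comp
  have hσ2 : deriv (deriv σ) s = 4 * (1 - ratW m (bSym ν) s) - 4 * s * W - 2 := by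
    have h := ((hid.const_mul 4).mul (hW.const_sub 1)).sub (hid.const_mul 2)
    refine ((h.congr_of_eventuallyEq ?_).congr_deriv ?_).deriv
    · filter_upwards [hJopen.mem_nhds hs] with x hx using hσ1 x hx
    · ring
  rw [hσ2, hσ1 s hs, hσ0 s hs]
  -- `s σ'' - σ' = -4 s² w'`, so the claim is `16 s²` times the quadratic equation for `s w'`
  linear_combination (16 * (s : ℂ) ^ 2) * hquad
end

section
/- Fix n ≥ 1 and ν ∈ ℂ, and let J ⊆ (0,∞) be an open interval on which D_{k,ν}(t) ≠ 0 for every k = 1, …, n. For t ∈ J let π_n(z;t) = z^n + a_{n,n−1}(t)·z^{n−1} + … and π̃_n(z;t) = z^n + ã_{n,n−1}(t)·z^{n−1} + … denote the n-th monic left and right orthogonal polynomials with respect to the bilinear form ⟨·,·⟩_t. Then for all t ∈ J, (d/dt) log D_{n,ν}(t) = −(1/2)·( a_{n,n−1}(t) + ã_{n,n−1}(t) ). -/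
/-- The bilinear form `⟨p,q⟩_t = Σ_{j,k} p_j q_k I_{k-j-ν}(t)` on polynomials, induced by the
weight `w(s) = e^{(t/2)(s+1/s)} s^ν` on the Hankel loop. -/
noncomputable def besselForm (ν : ℂ) (t : ℝ) (p q : Polynomial ℂ) : ℂ :=
  ∑ j ∈ p.support, ∑ k ∈ q.support,
    p.coeff j * q.coeff k * besselI (((k : ℕ) : ℂ) - ((j : ℕ) : ℂ) - ν) t

/-- `p` is the `n`-th monic left orthogonal polynomial: `p` is monic of degree `n` and
`⟨p, z^m⟩_t = 0` for `m = 0, …, n-1`. -/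
def IsLeftOP (ν : ℂ) (t : ℝ) (n : ℕ) (p : Polynomial ℂ) : Prop :=
  p.Monic ∧ p.natDegree = n ∧ ∀ m < n, besselForm ν t p (Polynomial.X ^ m) = 0

/-- `q` is the `n`-th monic right orthogonal polynomial: `q` is monic of degree `n` and
`⟨z^m, q⟩_t = 0` for `m = 0, …, n-1`. -/
def IsRightOP (ν : ℂ) (t : ℝ) (n : ℕ) (q : Polynomial ℂ) : Prop :=
  q.Monic ∧ q.natDegree = n ∧ ∀ m < n, besselForm ν t (Polynomial.X ^ m) q = 0

/-! ### The Bessel recurrence -/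

/-- The coefficient `1 / (k! Γ(k+μ+1))` of the entire function `F_μ`; it vanishes at the poles of
the Gamma function, where `Complex.Gamma` is `0` and so is its inverse. -/
noncomputable def besselCoeff (μ : ℂ) (k : ℕ) : ℂ :=
  ((k.factorial : ℂ))⁻¹ * (Complex.Gamma ((k : ℂ) + μ + 1))⁻¹

/-- The entire function `F_μ(x) = ∑ x^k / (k! Γ(k+μ+1))`, so that
`I_μ(t) = (t/2)^μ F_μ((t/2)^2)`. -/
noncomputable def besselF (μ x : ℂ) : ℂ := ∑' k : ℕ, besselCoeff μ k * x ^ k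

lemma besselCoeff_succ_mul (μ : ℂ) (k : ℕ) :
    ((k : ℂ) + 1) * besselCoeff μ (k + 1) = besselCoeff (μ + 1) k := by
  unfold besselCoeff
  have h1 : (k : ℂ) + 1 ≠ 0 := Nat.cast_add_one_ne_zero k
  have h2 : ((k + 1 : ℕ) : ℂ) + μ + 1 = (k : ℂ) + (μ + 1) + 1 := by push_cast; ring
  rw [h2, Nat.factorial_succ]
  push_cast
  rw [mul_inv, ← mul_assoc, ← mul_assoc, mul_inv_cancel₀ h1, one_mul]

lemma besselCoeff_sub_one (μ : ℂ) (k : ℕ) :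
    besselCoeff (μ - 1) k = ((k : ℂ) + μ) * besselCoeff μ k := by
  unfold besselCoeff
  have h2 : (k : ℂ) + (μ - 1) + 1 = (k : ℂ) + μ := by ring
  rw [h2, Complex.one_div_Gamma_eq_self_mul_one_div_Gamma_add_one]
  ring

lemma summable_besselCoeff (μ x : ℂ) : Summable fun k : ℕ => besselCoeff μ k * x ^ k := by
  refine summable_of_ratio_norm_eventually_le (r := 1 / 2) (by norm_num) ?_
  -- `c_k = (k+1)(k+1+μ) c_{k+1}`, and `‖(k+1)(k+1+μ)‖ ≥ k+1 ≥ 2‖x‖` for large `k`.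
  filter_upwards [Filter.eventually_ge_atTop (⌈‖μ‖ + 2 * ‖x‖⌉₊)] with k hk
  have hk' : ‖μ‖ + 2 * ‖x‖ ≤ k := Nat.ceil_le.mp hk
  have hrec : besselCoeff μ k = ((k : ℂ) + 1) * (((k : ℂ) + 1 + μ) * besselCoeff μ (k + 1)) := by
    have h1 := besselCoeff_succ_mul (μ - 1) k
    rw [besselCoeff_sub_one, sub_add_cancel] at h1
    rw [← h1]
    push_cast
    ring
  have hA : (1 : ℝ) ≤ ‖(k : ℂ) + 1‖ := by
    have : ‖(k : ℂ) + 1‖ = (k : ℝ) + 1 := by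
      have := Complex.norm_natCast (k + 1)
      push_cast at this
      exact this
    rw [this]
    have : (0 : ℝ) ≤ k := Nat.cast_nonneg k
    linarith
  have hB : 2 * ‖x‖ ≤ ‖(k : ℂ) + 1 + μ‖ := by
    have h1 : ‖(k : ℂ) + 1‖ = (k : ℝ) + 1 := by
      have := Complex.norm_natCast (k + 1)
      push_cast at this
      exact this
    have h2 := norm_sub_le ((k : ℂ) + 1 + μ) μ
    rw [add_sub_cancel_right, h1] at h2
    linarith
  have hAB : 2 * ‖x‖ ≤ ‖(k : ℂ) + 1‖ * ‖(k : ℂ) + 1 + μ‖ := by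
    nlinarith [norm_nonneg x, norm_nonneg ((k : ℂ) + 1 + μ)]
  rw [hrec]
  simp only [norm_mul, norm_pow, pow_succ]
  have h0 : 0 ≤ ‖besselCoeff μ (k + 1)‖ * ‖x‖ ^ k := by positivity
  nlinarith [mul_le_mul_of_nonneg_left hAB h0]

lemma hasDerivAt_besselF (μ x : ℂ) : HasDerivAt (besselF μ) (besselF (μ + 1) x) x := by
  set R : ℝ := ‖x‖ + 1 with hR
  have hR0 : 0 ≤ R := by positivity
  let u : ℕ → ℝ := fun k => ‖(k : ℂ) * besselCoeff μ k * (R : ℂ) ^ (k - 1)‖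
  have hu : Summable u := by
    rw [← summable_nat_add_iff 1]
    refine (summable_besselCoeff (μ + 1) (R : ℂ)).norm.congr fun k => ?_
    simp only [u]
    rw [← besselCoeff_succ_mul]
    push_cast
    simp
  have h := hasDerivAt_tsum_of_isPreconnected (𝕜 := ℂ) (g := fun k z => besselCoeff μ k * z ^ k)
    (g' := fun k z => besselCoeff μ k * ((k : ℂ) * z ^ (k - 1))) (t := Metric.ball (0 : ℂ) R)
    (y := x) (y₀ := x) hu Metric.isOpen_ball (convex_ball _ _).isPreconnected
    (fun k z _ => (hasDerivAt_pow k z).const_mul _) ?_ (by simp [hR])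
    (summable_besselCoeff μ x) (by simp [hR])
  · convert! h using 1
    have hs : Summable fun k : ℕ => besselCoeff μ k * ((k : ℂ) * x ^ (k - 1)) := by
      rw [← summable_nat_add_iff 1]
      refine (summable_besselCoeff (μ + 1) x).congr fun k => ?_
      rw [← besselCoeff_succ_mul]
      push_cast
      ring
    rw [hs.tsum_eq_zero_add]
    simp only [Nat.cast_zero, zero_mul, mul_zero, zero_add]
    refine tsum_congr fun k => ?_
    rw [← besselCoeff_succ_mul]
    push_cast
    ring
  · intro k z hz
    have hz' : ‖z‖ ≤ R := by
      rw [Metric.mem_ball, dist_zero_right] at hz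
      exact hz.le
    simp only [u, norm_mul, norm_pow, Complex.norm_real, Real.norm_of_nonneg hR0]
    rw [mul_left_comm, mul_assoc]
    gcongr

lemma besselF_sub_one (μ x : ℂ) :
    besselF (μ - 1) x = μ * besselF μ x + x * besselF (μ + 1) x := by
  have h1 := summable_besselCoeff μ x
  have h2 := summable_besselCoeff (μ + 1) x
  have hshift : ∀ k : ℕ, ((k + 1 : ℕ) : ℂ) * besselCoeff μ (k + 1) * x ^ (k + 1)
      = x * (besselCoeff (μ + 1) k * x ^ k) := by
    intro k
    rw [← besselCoeff_succ_mul]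
    push_cast
    ring
  have hs : Summable fun k : ℕ => (k : ℂ) * besselCoeff μ k * x ^ k := by
    rw [← summable_nat_add_iff 1]
    exact (h2.mul_left x).congr fun k => (hshift k).symm
  have h3 : ∑' k : ℕ, (k : ℂ) * besselCoeff μ k * x ^ k = x * besselF (μ + 1) x := by
    rw [hs.tsum_eq_zero_add, tsum_congr hshift, tsum_mul_left]
    simp [besselF]
  rw [← h3, besselF, besselF, ← tsum_mul_left, ← (h1.mul_left μ).tsum_add hs]
  refine tsum_congr fun k => ?_
  rw [besselCoeff_sub_one]
  ring

lemma besselI_eq_s11 (μ : ℂ) (t : ℝ) :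
    besselI μ t = Complex.exp (μ * (Real.log (t / 2) : ℂ)) *
      besselF μ (Complex.exp (2 * (Real.log (t / 2) : ℂ))) := by
  rw [besselI, besselF, ← tsum_mul_left]
  refine tsum_congr fun k => ?_
  rw [besselCoeff, ← Complex.exp_nat_mul, add_mul, Complex.exp_add, div_eq_mul_inv, mul_inv,
    show 2 * (k : ℂ) * (Real.log (t / 2) : ℂ) = k * (2 * (Real.log (t / 2) : ℂ)) by ring]
  ring

/-- The Bessel recurrence `I_μ' = (I_{μ-1} + I_{μ+1}) / 2`. -/
lemma hasDerivAt_besselI (μ : ℂ) {t : ℝ} (ht : 0 < t) :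
    HasDerivAt (besselI μ) ((besselI (μ - 1) t + besselI (μ + 1) t) / 2) t := by
  have hfun : besselI μ = fun s : ℝ => Complex.exp (μ * (Real.log (s / 2) : ℂ)) *
      besselF μ (Complex.exp (2 * (Real.log (s / 2) : ℂ))) := funext (besselI_eq_s11 μ)
  have hlog : HasDerivAt (fun s : ℝ => (Real.log (s / 2) : ℂ)) ((t⁻¹ : ℝ) : ℂ) t := by
    have h := ((hasDerivAt_id t).div_const 2).log (by simp; positivity)
    convert! h.ofReal_comp using 2
    simp
    field_simp
  have h1 := (hlog.const_mul μ).cexp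
  have h2 := (hlog.const_mul 2).cexp
  have h3 := (hasDerivAt_besselF μ _).comp t h2
  rw [hfun]
  convert! h1.mul h3 using 1
  have hL : Complex.exp (Real.log (t / 2) : ℂ) = (t : ℂ) / 2 := by
    rw [← Complex.ofReal_exp, Real.exp_log (by positivity)]
    push_cast
    rfl
  have ht0 : (t : ℂ) ≠ 0 := by exact_mod_cast ht.ne'
  rw [besselI_eq_s11, besselI_eq_s11, besselF_sub_one, sub_mul, add_mul, Complex.exp_sub, Complex.exp_add,
    two_mul, Complex.exp_add, one_mul, hL]
  simp only [Function.comp, two_mul, Complex.exp_add, hL]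
  push_cast
  field_simp
  ring

/-! ### Determinants of shifted Toeplitz matrices -/

/-- Jacobi's formula for the derivative of a determinant. -/
lemma hasDerivAt_det {n : ℕ} (A : ℝ → Matrix (Fin n) (Fin n) ℂ) (A' : Matrix (Fin n) (Fin n) ℂ)
    (t : ℝ) (h : ∀ i j, HasDerivAt (fun s => A s i j) (A' i j) t) :
    HasDerivAt (fun s => (A s).det) (((A t).adjugate * A').trace) t := by
  have key : ((A t).adjugate * A').trace = ∑ σ : Equiv.Perm (Fin n),
      ((Equiv.Perm.sign σ : ℤ) : ℂ) *
        ∑ i, (∏ j ∈ Finset.univ.erase i, A t (σ j) j) • A' (σ i) i := by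
    have h1 : ∀ i, ((A t).adjugate * A') i i = ((A t).updateCol i (fun k => A' k i)).det := by
      intro i
      rw [← Matrix.cramer_apply, Matrix.cramer_eq_adjugate_mulVec]
      rfl
    simp only [Matrix.trace, Matrix.diag, h1, Matrix.det_apply', Finset.mul_sum]
    rw [Finset.sum_comm]
    refine Finset.sum_congr rfl fun σ _ => Finset.sum_congr rfl fun i _ => ?_
    congr 1
    rw [← Finset.prod_erase_mul _ _ (Finset.mem_univ i), smul_eq_mul]
    congr 1
    · refine Finset.prod_congr rfl fun j hj => ?_
      rw [Matrix.updateCol_ne (Finset.ne_of_mem_erase hj)]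
    · simp
  rw [key]
  simp only [Matrix.det_apply']
  exact HasDerivAt.fun_sum fun σ _ =>
    (HasDerivAt.fun_finsetProd fun i _ => h (σ i) i).const_mul _

/-- If the column `(a (i - n))_i` is `-T p` for the Toeplitz matrix `T = (a (i - j))`, then the
shifted matrix `(a (i - j - 1))` is `T` times the companion matrix with last column `-p`, whose
trace is `-p_{n-1}`. -/
lemma trace_adjugate_mul_shift (a : ℂ → ℂ) (n : ℕ) (hn : 1 ≤ n) (p : ℕ → ℂ)
    (h : ∀ m < n, ∑ j ∈ Finset.range n, p j * a ((m : ℂ) - (j : ℂ)) + a ((m : ℂ) - (n : ℂ)) = 0) :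
    ((Matrix.of fun i j : Fin n => a (((i : ℕ) : ℂ) - ((j : ℕ) : ℂ))).adjugate *
      (Matrix.of fun i j : Fin n => a (((i : ℕ) : ℂ) - ((j : ℕ) : ℂ) - 1))).trace =
    (Matrix.of fun i j : Fin n => a (((i : ℕ) : ℂ) - ((j : ℕ) : ℂ))).det * (-p (n - 1)) := by
  set T : Matrix (Fin n) (Fin n) ℂ :=
    Matrix.of fun i j : Fin n => a (((i : ℕ) : ℂ) - ((j : ℕ) : ℂ)) with hT
  let M : Matrix (Fin n) (Fin n) ℂ := Matrix.of fun j k : Fin n =>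
    if (k : ℕ) + 1 = n then -p j else if (j : ℕ) = k + 1 then 1 else 0
  have hM : (Matrix.of fun i j : Fin n => a (((i : ℕ) : ℂ) - ((j : ℕ) : ℂ) - 1)) = T * M := by
    ext i k
    simp only [Matrix.mul_apply, Matrix.of_apply, hT, M]
    by_cases hk : (k : ℕ) + 1 = n
    · simp only [hk, if_true]
      have h1 := h i i.2
      rw [← Fin.sum_univ_eq_sum_range (fun j => p j * a (((i : ℕ) : ℂ) - (j : ℂ)))] at h1
      have h2 : ((i : ℕ) : ℂ) - ((k : ℕ) : ℂ) - 1 = ((i : ℕ) : ℂ) - (n : ℂ) := by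
        have h3 : (n : ℂ) = ((k : ℕ) : ℂ) + 1 := by exact_mod_cast hk.symm
        rw [h3]
        ring
      rw [h2, eq_neg_of_add_eq_zero_right h1, ← Finset.sum_neg_distrib]
      exact Finset.sum_congr rfl fun j _ => by ring
    · have hk' : (k : ℕ) + 1 < n := lt_of_le_of_ne k.2 hk
      simp only [hk, if_false]
      rw [Finset.sum_eq_single (⟨(k : ℕ) + 1, hk'⟩ : Fin n)]
      · simp [sub_sub]
      · intro j _ hj
        rw [if_neg fun h' => hj (Fin.ext h'), mul_zero]
      · simp
  have htr : M.trace = -p (n - 1) := by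
    rw [Matrix.trace, Finset.sum_eq_single (⟨n - 1, by omega⟩ : Fin n)]
    · simp [M, Nat.sub_add_cancel hn]
    · intro j _ hj
      have hj' : ¬ ((j : ℕ) + 1 = n) := fun h' => hj (Fin.ext (by simp; omega))
      simp [M, hj']
    · simp
  rw [hM, ← Matrix.mul_assoc, Matrix.adjugate_mul, Matrix.smul_mul, Matrix.one_mul,
    Matrix.trace_smul, htr, smul_eq_mul]

/-- The transpose of `trace_adjugate_mul_shift`, with the relations now between rows of `T`. -/
lemma trace_adjugate_mul_shift' (a : ℂ → ℂ) (n : ℕ) (hn : 1 ≤ n) (q : ℕ → ℂ)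
    (h : ∀ m < n, ∑ k ∈ Finset.range n, q k * a ((k : ℂ) - (m : ℂ)) + a ((n : ℂ) - (m : ℂ)) = 0) :
    ((Matrix.of fun i j : Fin n => a (((i : ℕ) : ℂ) - ((j : ℕ) : ℂ))).adjugate *
      (Matrix.of fun i j : Fin n => a (((i : ℕ) : ℂ) - ((j : ℕ) : ℂ) + 1))).trace =
    (Matrix.of fun i j : Fin n => a (((i : ℕ) : ℂ) - ((j : ℕ) : ℂ))).det * (-q (n - 1)) := by
  have h1 := trace_adjugate_mul_shift (fun x => a (-x)) n hn q
    (fun m hm => by simpa only [neg_sub] using h m hm)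
  have hT : (Matrix.of fun i j : Fin n => a (-(((i : ℕ) : ℂ) - ((j : ℕ) : ℂ)))) =
      (Matrix.of fun i j : Fin n => a (((i : ℕ) : ℂ) - ((j : ℕ) : ℂ))).transpose := by
    ext i j
    simp
  have hS : (Matrix.of fun i j : Fin n => a (-(((i : ℕ) : ℂ) - ((j : ℕ) : ℂ) - 1))) =
      (Matrix.of fun i j : Fin n => a (((i : ℕ) : ℂ) - ((j : ℕ) : ℂ) + 1)).transpose := by
    ext i j
    simp only [Matrix.of_apply, Matrix.transpose_apply]
    congr 1
    ring
  rw [hT, hS, Matrix.det_transpose, ← Matrix.adjugate_transpose, ← Matrix.transpose_mul,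
    Matrix.trace_transpose, Matrix.trace_mul_comm] at h1
  exact h1

/-! ### Orthogonality relations and the differential identity -/

lemma isLeftOP_sum {ν : ℂ} {t : ℝ} {n : ℕ} {p : Polynomial ℂ} (hp : IsLeftOP ν t n p)
    {m : ℕ} (hm : m < n) :
    ∑ j ∈ Finset.range n, p.coeff j * besselI ((m : ℂ) - (j : ℂ) - ν) t +
      besselI ((m : ℂ) - (n : ℂ) - ν) t = 0 := by
  obtain ⟨hmon, hdeg, horth⟩ := hp
  have h := horth m hm
  simp only [besselForm, Polynomial.support_X_pow, Finset.sum_singleton, Polynomial.coeff_X_pow,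
    if_true, mul_one] at h
  have h1 := Polynomial.sum_over_range p
    (f := fun j c => c * besselI ((m : ℂ) - (j : ℂ) - ν) t) (by simp)
  rw [Polynomial.sum_def, h, hdeg, Finset.sum_range_succ, ← hdeg, hmon.coeff_natDegree, one_mul,
    hdeg] at h1
  exact h1.symm

lemma isRightOP_sum {ν : ℂ} {t : ℝ} {n : ℕ} {q : Polynomial ℂ} (hq : IsRightOP ν t n q)
    {m : ℕ} (hm : m < n) :
    ∑ k ∈ Finset.range n, q.coeff k * besselI ((k : ℂ) - (m : ℂ) - ν) t +
      besselI ((n : ℂ) - (m : ℂ) - ν) t = 0 := by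
  obtain ⟨hmon, hdeg, horth⟩ := hq
  have h := horth m hm
  simp only [besselForm, Polynomial.support_X_pow, Finset.sum_singleton, Polynomial.coeff_X_pow,
    if_true, one_mul] at h
  have h1 := Polynomial.sum_over_range q
    (f := fun k c => c * besselI ((k : ℂ) - (m : ℂ) - ν) t) (by simp)
  rw [Polynomial.sum_def, h, hdeg, Finset.sum_range_succ, ← hdeg, hmon.coeff_natDegree, one_mul,
    hdeg] at h1
  exact h1.symm

/-- the differential identity
`(d/dt) log D_{n,ν}(t) = -(1/2)(a_{n,n-1}(t) + ã_{n,n-1}(t))`, where `a_{n,n-1}` and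
`ã_{n,n-1}` are the subleading coefficients of the monic left and right orthogonal
polynomials of degree `n`. -/
theorem toeplitz_logDeriv_identity (n : ℕ) (hn : 1 ≤ n) (ν : ℂ) (J : Set ℝ)
    (hJopen : IsOpen J) (hJconn : J.OrdConnected) (hJpos : J ⊆ Set.Ioi (0 : ℝ))
    (hne : ∀ k : ℕ, 1 ≤ k → k ≤ n → ∀ t ∈ J, toeplitzD k ν t ≠ 0)
    (P Q : ℝ → Polynomial ℂ)
    (hP : ∀ t ∈ J, IsLeftOP ν t n (P t)) (hQ : ∀ t ∈ J, IsRightOP ν t n (Q t)) :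
    ∀ t ∈ J, deriv (toeplitzD n ν) t / toeplitzD n ν t =
      -(1 / 2) * ((P t).coeff (n - 1) + (Q t).coeff (n - 1)) := by
  intro t ht
  have ht0 : 0 < t := hJpos ht
  have hD := hne n hn le_rfl t ht
  have hL := trace_adjugate_mul_shift (fun x => besselI (x - ν) t) n hn (fun j => (P t).coeff j)
    (fun m hm => isLeftOP_sum (hP t ht) hm)
  have hR := trace_adjugate_mul_shift' (fun x => besselI (x - ν) t) n hn (fun j => (Q t).coeff j)
    (fun m hm => isRightOP_sum (hQ t ht) hm)
  have hder : HasDerivAt (toeplitzD n ν) _ t := hasDerivAt_det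
    (fun s => Matrix.of fun i j : Fin n => besselI (((i : ℕ) : ℂ) - ((j : ℕ) : ℂ) - ν) s)
    ((1 / 2 : ℂ) • ((Matrix.of fun i j : Fin n => besselI (((i : ℕ) : ℂ) - ((j : ℕ) : ℂ) - 1 - ν) t)
      + Matrix.of fun i j : Fin n => besselI (((i : ℕ) : ℂ) - ((j : ℕ) : ℂ) + 1 - ν) t)) t
    (fun i j => by
      have h := hasDerivAt_besselI (((i : ℕ) : ℂ) - ((j : ℕ) : ℂ) - ν) ht0
      rw [sub_right_comm _ ν 1, ← add_sub_right_comm] at h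
      simp only [Matrix.of_apply, Matrix.smul_apply, Matrix.add_apply, smul_eq_mul]
      convert! h using 1
      ring)
  rw [Matrix.mul_smul, Matrix.mul_add, Matrix.trace_smul, Matrix.trace_add, hL, hR] at hder
  change HasDerivAt _ ((1 / 2 : ℂ) • (toeplitzD n ν t * _ + toeplitzD n ν t * _)) t at hder
  rw [hder.deriv, smul_eq_mul]
  field_simp
  ring
end
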